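/- The q → 0 limit of the theta-ratio at an integer shift: for w ∈ ℤ, 0 < q < 1, and positive reals a, z with az ≠ 1 and a ≠ 1, lim_{q→0⁺} θ(z a q^w)/θ(a q^w) = z^{-w - 1/2} · (1 - az)/(1 - a). -/

import Mathlib

open Real Filter Topology

/-- The real theta function
`θ_q(x) = (x^{1/2} - x^{-1/2}) ∏_{i≥1} (1 - qⁱ x)(1 - qⁱ/x)`. -/
noncomputable def thetaR (q x : ℝ) : ℝ :=
  (Real.sqrt x - 1 / Real.sqrt x) *
    ∏' i : ℕ, (1 - q ^ (i + 1) * x) * (1 - q ^ (i + 1) / x)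

lemma tl_mult (q x : ℝ) (h0 : 0 < q) (h1 : q < 1) :
    Multipliable (fun i : ℕ => 1 - q ^ (i + 1) * x) := by
  have hs : Summable (fun i : ℕ => -(q ^ (i + 1) * x)) :=
    (((summable_nat_add_iff 1).2 (summable_geometric_of_lt_one h0.le h1)).mul_right x).neg
  simpa [sub_eq_add_neg] using Real.multipliable_one_add_of_summable hs

lemma tl_split (q x : ℝ) (h0 : 0 < q) (h1 : q < 1) :
    thetaR q x = (Real.sqrt x - 1 / Real.sqrt x) *
      ((∏' i : ℕ, (1 - q ^ (i + 1) * x)) * ∏' i : ℕ, (1 - q ^ (i + 1) * x⁻¹)) := by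
  unfold thetaR
  rw [← (tl_mult q x h0 h1).tprod_mul (tl_mult q x⁻¹ h0 h1)]
  simp only [div_eq_mul_inv]

lemma tl_shift (q x : ℝ) (h0 : 0 < q) (h1 : q < 1) :
    ∏' i : ℕ, (1 - q ^ (i + 1) * x) = (1 - q * x) * ∏' i : ℕ, (1 - q ^ (i + 1) * (q * x)) := by
  have e : ∀ i : ℕ, 1 - q ^ (i + 1) * (q * x) = 1 - q ^ (i + 1 + 1) * x := fun i => by ring
  have hm := tl_mult q (q * x) h0 h1
  simp only [e] at hm ⊢
  have := tprod_eq_zero_mul' (f := fun i : ℕ => 1 - q ^ (i + 1) * x) hm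
  simpa using this

lemma tl_quasi (q x : ℝ) (h0 : 0 < q) (h1 : q < 1) (hx : 0 < x) :
    thetaR q (x * q) = -(1 / (Real.sqrt q * x)) * thetaR q x := by
  rw [tl_split q _ h0 h1, tl_split q x h0 h1, tl_shift q x h0 h1, tl_shift q (x * q)⁻¹ h0 h1]
  have e : q * (x * q)⁻¹ = x⁻¹ := by field_simp
  rw [e, mul_comm q x, Real.sqrt_mul hx.le]
  generalize ∏' i : ℕ, (1 - q ^ (i + 1) * (x * q)) = A
  generalize ∏' i : ℕ, (1 - q ^ (i + 1) * x⁻¹) = B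
  obtain ⟨s, hs, rfl⟩ : ∃ s : ℝ, 0 < s ∧ x = s ^ 2 :=
    ⟨√x, Real.sqrt_pos.2 hx, (Real.sq_sqrt hx.le).symm⟩
  obtain ⟨t, ht, rfl⟩ : ∃ s : ℝ, 0 < s ∧ q = s ^ 2 :=
    ⟨√q, Real.sqrt_pos.2 h0, (Real.sq_sqrt h0.le).symm⟩
  rw [Real.sqrt_sq hs.le, Real.sqrt_sq ht.le]
  field_simp
  ring

lemma tl_step (q x z : ℝ) (h0 : 0 < q) (h1 : q < 1) (hx : 0 < x) (hz : 0 < z) :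
    thetaR q (z * (x * q)) / thetaR q (x * q) = z⁻¹ * (thetaR q (z * x) / thetaR q x) := by
  rw [← mul_assoc, tl_quasi q x h0 h1 hx, tl_quasi q (z * x) h0 h1 (by positivity), mul_div_mul_comm]
  have := Real.sqrt_pos.2 h0
  congr 1
  field_simp

lemma tl_iter (q a z : ℝ) (w : ℤ) (h0 : 0 < q) (h1 : q < 1) (ha : 0 < a) (hz : 0 < z) :
    thetaR q (z * a * q ^ w) / thetaR q (a * q ^ w) =
      z ^ (-w) * (thetaR q (z * a) / thetaR q a) := by
  induction w using Int.induction_on with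
  | zero => simp
  | succ n ih =>
    have := tl_step q (a * q ^ (n : ℤ)) z h0 h1 (by positivity) hz
    rw [zpow_add_one₀ h0.ne', neg_add, ← sub_eq_add_neg, zpow_sub_one₀ hz.ne']
    simp only [← mul_assoc] at this ih ⊢
    rw [this, ih]
    ring
  | pred n ih =>
    have := tl_step q (a * q ^ (-(n : ℤ) - 1)) z h0 h1 (by positivity) hz
    rw [mul_assoc a, ← zpow_add_one₀ h0.ne', sub_add_cancel] at this
    rw [← mul_assoc, ← mul_assoc, ih] at this
    rw [neg_sub, sub_neg_eq_add, add_comm, zpow_add_one₀ hz.ne']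
    rw [neg_neg] at this
    have h2 : ∀ u v : ℝ, u = z⁻¹ * v → v = z * u := by
      intro u v h; rw [h]; field_simp
    rw [h2 _ _ this]
    ring

lemma tl_prod_lim (x : ℝ) :
    Tendsto (fun q : ℝ => ∏' i : ℕ, (1 - q ^ (i + 1) * x)) (nhdsWithin 0 (Set.Ioi 0)) (nhds 1) := by
  have key := tendsto_tprod_one_add_of_dominated_convergence (𝓕 := nhdsWithin (0:ℝ) (Set.Ioi 0))
    (f := fun (q : ℝ) (i : ℕ) => -(q ^ (i + 1) * x)) (g := fun _ => 0)
    (bound := fun i : ℕ => (1 / 2 : ℝ) ^ (i + 1) * |x|)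
    (((summable_nat_add_iff 1).2 summable_geometric_two).mul_right _)
    (fun k => by
      have : ContinuousAt (fun q : ℝ => -(q ^ (k + 1) * x)) 0 := by fun_prop
      have h := this.tendsto.mono_left (nhdsWithin_le_nhds (s := Set.Ioi 0))
      simpa using h)
    (by
      filter_upwards [Ioo_mem_nhdsGT (show (0:ℝ) < 1 / 2 by norm_num)] with q hq k
      rw [norm_neg, norm_mul, norm_pow, Real.norm_eq_abs, Real.norm_eq_abs, abs_of_pos hq.1]
      have := hq.1.le
      have := hq.2.le
      gcongr)
  simpa [sub_eq_add_neg] using key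

lemma tl_theta_lim (x : ℝ) :
    Tendsto (fun q : ℝ => thetaR q x) (nhdsWithin 0 (Set.Ioi 0))
      (nhds (Real.sqrt x - 1 / Real.sqrt x)) := by
  have h := ((tl_prod_lim x).mul (tl_prod_lim x⁻¹)).const_mul (Real.sqrt x - 1 / Real.sqrt x)
  rw [mul_one, mul_one] at h
  refine h.congr' ?_
  filter_upwards [Ioo_mem_nhdsGT (show (0:ℝ) < 1 by norm_num)] with q hq
  exact (tl_split q x hq.1 hq.2).symm

/-- The `q → 0⁺` limit of the theta ratio at an integer shift `w ∈ ℤ`: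
`lim_{q→0⁺} θ_q(z a q^w)/θ_q(a q^w) = z^{-w-1/2} (1 - az)/(1 - a)`. -/
theorem theta_ratio_limit_integer (a z : ℝ) (w : ℤ) (ha : 0 < a) (hz : 0 < z)
    (ha1 : a ≠ 1) (haz : a * z ≠ 1) :
    Tendsto (fun q : ℝ => thetaR q (z * a * q ^ w) / thetaR q (a * q ^ w))
      (nhdsWithin 0 (Set.Ioi 0))
      (nhds (z ^ (-(w : ℝ) - 1 / 2) * (1 - a * z) / (1 - a))) := by
  have hs := Real.sqrt_pos.2 ha
  have ht := Real.sqrt_pos.2 hz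
  have e : ∀ s : ℝ, 0 < s → √s - 1 / √s = -(1 - s) / √s := by
    intro s h
    have := Real.sqrt_pos.2 h
    field_simp
    rw [Real.sq_sqrt h.le]
    ring
  have hne : √a - 1 / √a ≠ 0 := by
    rw [e a ha]
    exact div_ne_zero (neg_ne_zero.2 (sub_ne_zero.2 ha1.symm)) hs.ne'
  have h := ((tl_theta_lim (z * a)).div (tl_theta_lim a) hne).const_mul (z ^ (-w))
  have hv : z ^ (-(w : ℝ) - 1 / 2) * (1 - a * z) / (1 - a) =
      z ^ (-w) * ((√(z * a) - 1 / √(z * a)) / (√a - 1 / √a)) := by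
    have h1a : 1 - a ≠ 0 := sub_ne_zero.2 ha1.symm
    rw [e a ha, e (z * a) (by positivity), Real.sqrt_mul hz.le, Real.rpow_sub hz,
      ← Real.sqrt_eq_rpow, ← Int.cast_neg, Real.rpow_intCast]
    field_simp
  rw [hv]
  refine h.congr' ?_
  filter_upwards [Ioo_mem_nhdsGT (show (0:ℝ) < 1 by norm_num)] with q hq
  exact (tl_iter q a z w hq.1 hq.2 ha hz).symm
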